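/- Assume the irrationality hypothesis that F(5/12,7/12)/F(7/12,17/12) is not of the form a + b√3 with a, b rational. Then in the complex numbers, F(1/12,11/12) + 16i·F(11/12,13/12) = ζ₃²·(−4·F(5/12,7/12) − 4i·F(7/12,17/12)), where ζ₃ = e^{2πi/3}. -/

import Mathlib

/-- The Pochhammer symbol (x)_k = x(x+1)⋯(x+k−1). -/
noncomputable def poch (x : ℝ) (k : ℕ) : ℝ := ∏ i ∈ Finset.range k, (x + i)

/-- The hypergeometric series ₃F₂(a1,a2,a3;b1,b2;1). -/
noncomputable def threeF2 (a1 a2 a3 b1 b2 : ℝ) : ℝ :=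
  ∑' k : ℕ, poch a1 k * poch a2 k * poch a3 k /
    (poch b1 k * poch b2 k * (Nat.factorial k : ℝ))

/-- The Beta function B(a,b) = Γ(a)Γ(b)/Γ(a+b). -/
noncomputable def betaFn (a b : ℝ) : ℝ :=
  Real.Gamma a * Real.Gamma b / Real.Gamma (a + b)

/-- The normalized hypergeometric value
F(r,s) = (2^{1−4r}·B(r,s−r)/N(r)) · ₃F₂(1/2,1/2,r;1,s;1), where N(r) = 2·den(r). -/
noncomputable def Fval (r s : ℚ) : ℝ :=
  (2:ℝ) ^ ((1:ℝ) - 4 * (r:ℝ)) * betaFn (r:ℝ) ((s:ℝ) - (r:ℝ)) / (2 * (r.den : ℝ)) *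
    threeF2 (1/2) (1/2) (r:ℝ) 1 (s:ℝ)

/-!
Up to elementary factors, `F(r, s)` is the moment
`M(r, s - r) = ∫₀¹ t^(r-1) (1-t)^(s-r-1) · 2K(√t) dt` of the complete elliptic integral `K`.

For `0 < x < 1`, closing the contour in a half-plane shows that the integral of
`t^(p-1) (1-t)^(q-1) (1-xt)^(-1/2)` over the real line vanishes. The branch points `0`, `1`, `1/x`
cut the line into four pieces. Integrating against `x^(-1/2) (1-x)^(-1/2)` over `0 < x < 1` turns
the vanishing into a linear relation with trigonometric coefficients between three moments whose
parameters are among `p`, `q`, `r`, where `p + q + r = 3/2`.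

Landen's transformation expresses `M(a, (1-a)/2)` and `M(a, 1-a/2)` through `M(a/2, 1-a)` and
`M((a+1)/2, 1-a)`. After this substitution two of the relations are the real and imaginary parts of
a rotation by `e^(iπa)`. The case `a = 5/6` gives the theorem, since `e^(5πi/6) = -i ζ₃²`.
-/

section

open MeasureTheory Set Filter Topology
open scoped ENNReal

section Pochhammer

lemma poch_eq_ascPochhammer_eval (x : ℝ) (k : ℕ) : poch x k = (ascPochhammer ℝ k).eval x := by
  induction k with
  | zero => simp [poch]
  | succ k ih => rw [poch, Finset.prod_range_succ, ← poch, ih, ascPochhammer_succ_eval]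

lemma poch_pos {x : ℝ} (hx : 0 < x) (k : ℕ) : 0 < poch x k :=
  Finset.prod_pos fun i _ => by positivity

lemma poch_one (k : ℕ) : poch 1 k = k.factorial := by
  rw [poch_eq_ascPochhammer_eval, ascPochhammer_eval_one]

lemma poch_div_factorial_pos {x : ℝ} (hx : 0 < x) (k : ℕ) : 0 < poch x k / k.factorial :=
  div_pos (poch_pos hx k) (by positivity)

lemma Gamma_add_natCast {x : ℝ} (hx : 0 < x) (k : ℕ) :
    Real.Gamma (x + k) = poch x k * Real.Gamma x := by
  induction k with
  | zero => simp [poch]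
  | succ k ih =>
    have hxk : x + (k : ℝ) ≠ 0 := by positivity
    rw [poch, Finset.prod_range_succ, ← poch, Nat.cast_succ, ← add_assoc,
      Real.Gamma_add_one hxk, ih]
    ring

lemma betaFn_pos {p q : ℝ} (hp : 0 < p) (hq : 0 < q) : 0 < betaFn p q :=
  ProbabilityTheory.beta_pos hp hq

lemma betaFn_add_natCast {p q : ℝ} (hp : 0 < p) (hq : 0 < q) (k : ℕ) :
    betaFn (p + k) q = poch p k / poch (p + q) k * betaFn p q := by
  have hpq := add_pos hp hq
  have hpoch := (poch_pos hpq k).ne'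
  have hGamma := (Real.Gamma_pos_of_pos hpq).ne'
  rw [betaFn, betaFn, add_right_comm, Gamma_add_natCast hp, Gamma_add_natCast hpq]
  field_simp

lemma betaFn_one_half_one_half : betaFn (1 / 2) (1 / 2) = Real.pi := by
  rw [betaFn, add_halves, Real.Gamma_one, Real.Gamma_one_half_eq, div_one,
    Real.mul_self_sqrt Real.pi_pos.le]

lemma hasSum_poch_mul_pow (a : ℝ) {x : ℝ} (hx : |x| < 1) :
    HasSum (fun k : ℕ => poch a k / k.factorial * x ^ k) ((1 - x) ^ (-a)) := by
  have hseries := (Real.one_div_one_sub_rpow_hasFPowerSeriesOnBall_zero a).hasSum (y := x)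
    (by simpa [enorm_eq_nnnorm, ← NNReal.coe_lt_coe] using hx)
  rw [zero_add, one_div, ← Real.rpow_neg (by linarith [le_abs_self x])] at hseries
  have hcoeff (k : ℕ) : poch a k / k.factorial = Ring.choose (a + k - 1) k := by
    have h := Ring.factorial_nsmul_multichoose_eq_ascPochhammer a k
    rw [Polynomial.ascPochhammer_smeval_eq_eval, ← poch_eq_ascPochhammer_eval, nsmul_eq_mul,
      Ring.multichoose_eq] at h
    rw [← h]
    field_simp
  simpa only [hcoeff, FormalMultilinearSeries.ofScalars_apply_eq, smul_eq_mul] using hseries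

lemma lintegral_rpow_mul_one_sub_rpow {p q : ℝ} (hp : 0 < p) (hq : 0 < q) :
    ∫⁻ t in Ioo (0 : ℝ) 1, ENNReal.ofReal (t ^ (p - 1) * (1 - t) ^ (q - 1)) =
      ENNReal.ofReal (betaFn p q) := by
  have hB := betaFn_pos hp hq
  have hpdf : ∫⁻ t in Ioo (0 : ℝ) 1,
      ENNReal.ofReal (1 / betaFn p q * t ^ (p - 1) * (1 - t) ^ (q - 1)) = 1 :=
    ProbabilityTheory.lintegral_betaPDF.symm.trans
      (ProbabilityTheory.lintegral_betaPDF_eq_one hp hq)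
  have hscale (t : ℝ) : ENNReal.ofReal (t ^ (p - 1) * (1 - t) ^ (q - 1)) =
      ENNReal.ofReal (betaFn p q) *
        ENNReal.ofReal (1 / betaFn p q * t ^ (p - 1) * (1 - t) ^ (q - 1)) := by
    rw [← ENNReal.ofReal_mul hB.le]
    congr 1
    field_simp
  simp_rw [hscale]
  rw [lintegral_const_mul' _ _ ENNReal.ofReal_ne_top, hpdf, mul_one]

end Pochhammer

section Moments

/-- The complete elliptic integral of the first kind in algebraic form, as a function of the
parameter `t = k²` and normalized to be `π · ₂F₁(1/2, 1/2; 1; t)`, twice the usual `K`.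
It is `ℝ≥0∞`-valued so that Tonelli and changes of variables need no integrability. -/
noncomputable def ellK (t : ℝ) : ℝ≥0∞ :=
  ∫⁻ y in Ioo (0 : ℝ) 1,
    ENNReal.ofReal (y ^ (-1 / 2 : ℝ) * (1 - y) ^ (-1 / 2 : ℝ) * (1 - t * y) ^ (-1 / 2 : ℝ))

/-- The Beta moment `∫₀¹ t ^ (p - 1) (1 - t) ^ (q - 1) ellK t dt` of the complete elliptic
integral; up to elementary factors it is `₃F₂(1/2, 1/2, p; 1, p + q; 1)`. -/
noncomputable def ellMoment (p q : ℝ) : ℝ≥0∞ :=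
  ∫⁻ t in Ioo (0 : ℝ) 1, ENNReal.ofReal (t ^ (p - 1) * (1 - t) ^ (q - 1)) * ellK t

lemma measurable_ellK : Measurable ellK := by
  refine Measurable.lintegral_prod_right
    (f := fun (t y : ℝ) => ENNReal.ofReal
      (y ^ (-1 / 2 : ℝ) * (1 - y) ^ (-1 / 2 : ℝ) * (1 - t * y) ^ (-1 / 2 : ℝ))) ?_
  unfold Function.uncurry
  fun_prop

lemma lintegral_beta_mul_tsum {p q : ℝ} (hp : 0 < p) (hq : 0 < q) (c : ℕ → ℝ≥0∞) :
    ∫⁻ t in Ioo (0 : ℝ) 1, ENNReal.ofReal (t ^ (p - 1) * (1 - t) ^ (q - 1)) *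
        ∑' k, c k * ENNReal.ofReal (t ^ k) =
      ∑' k, c k * ENNReal.ofReal (betaFn (p + k) q) := by
  calc ∫⁻ t in Ioo (0 : ℝ) 1, ENNReal.ofReal (t ^ (p - 1) * (1 - t) ^ (q - 1)) *
        ∑' k, c k * ENNReal.ofReal (t ^ k)
    _ = ∫⁻ t in Ioo (0 : ℝ) 1,
          ∑' k, c k * ENNReal.ofReal (t ^ (p + k - 1) * (1 - t) ^ (q - 1)) := by
      refine setLIntegral_congr_fun measurableSet_Ioo fun t ⟨ht0, ht1⟩ => ?_
      have : 0 < 1 - t := sub_pos.mpr ht1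
      simp only [← ENNReal.tsum_mul_left]
      refine tsum_congr fun k => ?_
      rw [mul_left_comm, ← ENNReal.ofReal_mul (by positivity), add_sub_right_comm,
        Real.rpow_add_natCast ht0.ne', mul_right_comm]
    _ = ∑' k, c k * ENNReal.ofReal (betaFn (p + k) q) := by
      rw [lintegral_tsum fun k => by fun_prop]
      refine tsum_congr fun k => ?_
      rw [lintegral_const_mul _ (by fun_prop),
        lintegral_rpow_mul_one_sub_rpow (by positivity) hq]

lemma ellK_eq_tsum {t : ℝ} (ht : t ∈ Ioo (0 : ℝ) 1) :
    ellK t = ∑' k : ℕ, ENNReal.ofReal (Real.pi * (poch (1 / 2) k / k.factorial) ^ 2) *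
      ENNReal.ofReal (t ^ k) := by
  obtain ⟨ht0, ht1⟩ := ht
  have hcoeff (k : ℕ) : 0 < poch (1 / 2) k / k.factorial := poch_div_factorial_pos (by norm_num) k
  have hbinomial {y : ℝ} (hy : y ∈ Ioo (0 : ℝ) 1) : ENNReal.ofReal ((1 - t * y) ^ (-1 / 2 : ℝ)) =
      ∑' k : ℕ, ENNReal.ofReal (poch (1 / 2) k / k.factorial * t ^ k) *
        ENNReal.ofReal (y ^ k) := by
    obtain ⟨hy0, hy1⟩ := hy
    have hsum := hasSum_poch_mul_pow (1 / 2) (x := t * y) (by rw [abs_of_pos] <;> nlinarith)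
    rw [← neg_div] at hsum
    have hnonneg (k : ℕ) : 0 ≤ poch (1 / 2) k / k.factorial * (t * y) ^ k := by
      have := hcoeff k
      positivity
    rw [← hsum.tsum_eq, ENNReal.ofReal_tsum_of_nonneg hnonneg hsum.summable]
    refine tsum_congr fun k => ?_
    have := hcoeff k
    rw [← ENNReal.ofReal_mul (by positivity), mul_assoc, mul_pow]
  calc ellK t
    _ = ∫⁻ y in Ioo (0 : ℝ) 1, ENNReal.ofReal (y ^ (1 / 2 - 1 : ℝ) * (1 - y) ^ (1 / 2 - 1 : ℝ)) *
          ∑' k : ℕ, ENNReal.ofReal (poch (1 / 2) k / k.factorial * t ^ k) *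
            ENNReal.ofReal (y ^ k) := by
      refine setLIntegral_congr_fun measurableSet_Ioo fun y hy => ?_
      have hy1 : 0 < 1 - y := sub_pos.mpr hy.2
      have hy0 := hy.1
      rw [← hbinomial hy, ← ENNReal.ofReal_mul (by positivity)]
      norm_num
    _ = _ := by
      rw [lintegral_beta_mul_tsum one_half_pos one_half_pos]
      refine tsum_congr fun k => ?_
      have := hcoeff k
      rw [betaFn_add_natCast one_half_pos one_half_pos, betaFn_one_half_one_half, add_halves,
        poch_one, ← ENNReal.ofReal_mul (by positivity), ← ENNReal.ofReal_mul (by positivity)]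
      ring_nf

lemma toReal_ellMoment {p q : ℝ} (hp : 0 < p) (hq : 0 < q) :
    (ellMoment p q).toReal = Real.pi * (betaFn p q * threeF2 (1 / 2) (1 / 2) p 1 (p + q)) := by
  have hseries : ellMoment p q = ∑' k : ℕ,
      ENNReal.ofReal (Real.pi * (poch (1 / 2) k / k.factorial) ^ 2) *
        ENNReal.ofReal (betaFn (p + k) q) := by
    rw [← lintegral_beta_mul_tsum hp hq]
    exact setLIntegral_congr_fun measurableSet_Ioo fun t ht => by rw [ellK_eq_tsum ht]
  rw [hseries, ENNReal.tsum_toReal_eq fun k => by finiteness, ← mul_assoc, threeF2,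
    ← tsum_mul_left]
  refine tsum_congr fun k => ?_
  have hpoch := (poch_pos (add_pos hp hq) k).ne'
  have hbeta := betaFn_pos (p := p + k) (by positivity) hq
  rw [ENNReal.toReal_mul, ENNReal.toReal_ofReal (by positivity), ENNReal.toReal_ofReal hbeta.le,
    betaFn_add_natCast hp hq, poch_one]
  field_simp

lemma ellK_le {a t : ℝ} (ha : 0 < a) (ha' : a ≤ 1 / 2) (ht : t ∈ Ioo (0 : ℝ) 1) :
    ellK t ≤ ENNReal.ofReal ((1 - t) ^ (-a)) * ENNReal.ofReal (betaFn (1 / 2) a) := by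
  rw [← lintegral_rpow_mul_one_sub_rpow one_half_pos ha,
    ← lintegral_const_mul' _ _ ENNReal.ofReal_ne_top]
  refine setLIntegral_mono' measurableSet_Ioo fun y ⟨hy0, hy1⟩ => ?_
  obtain ⟨ht0, ht1⟩ := ht
  have hy : 0 < 1 - y := sub_pos.mpr hy1
  have ht : 0 < 1 - t := sub_pos.mpr ht1
  have hyle : 1 - y ≤ 1 - t * y := by nlinarith
  have htle : 1 - t ≤ 1 - t * y := by nlinarith
  have hty := ht.trans_le htle
  rw [← ENNReal.ofReal_mul (by positivity)]
  refine ENNReal.ofReal_le_ofReal ?_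
  calc y ^ (-1 / 2 : ℝ) * (1 - y) ^ (-1 / 2 : ℝ) * (1 - t * y) ^ (-1 / 2 : ℝ)
    _ = y ^ (-1 / 2 : ℝ) * (1 - y) ^ (-1 / 2 : ℝ) *
        ((1 - t * y) ^ (-a) * (1 - t * y) ^ (a - 1 / 2)) := by
      rw [← Real.rpow_add hty]
      ring_nf
    _ ≤ y ^ (-1 / 2 : ℝ) * (1 - y) ^ (-1 / 2 : ℝ) *
        ((1 - t) ^ (-a) * (1 - y) ^ (a - 1 / 2)) := by
      gcongr ?_ * (?_ * ?_)
      · exact Real.rpow_le_rpow_of_nonpos ht htle (by linarith)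
      · exact Real.rpow_le_rpow_of_nonpos hy hyle (by linarith)
    _ = (1 - t) ^ (-a) * (y ^ (1 / 2 - 1 : ℝ) * (1 - y) ^ (a - 1)) := by
      rw [show a - 1 = -1 / 2 + (a - 1 / 2) by ring, Real.rpow_add hy,
        show (1 / 2 - 1 : ℝ) = -1 / 2 by norm_num]
      ring

lemma ellMoment_ne_top {p q : ℝ} (hp : 0 < p) (hq : 0 < q) : ellMoment p q ≠ ∞ := by
  obtain ⟨a, ha, ha', haq⟩ : ∃ a : ℝ, 0 < a ∧ a ≤ 1 / 2 ∧ a < q :=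
    ⟨min (1 / 2) (q / 2), by positivity, min_le_left _ _,
      (min_le_right _ _).trans_lt (half_lt_self hq)⟩
  have hle : ellMoment p q ≤
      ENNReal.ofReal (betaFn (1 / 2) a) * ENNReal.ofReal (betaFn p (q - a)) := by
    rw [← lintegral_rpow_mul_one_sub_rpow hp (sub_pos.mpr haq),
      ← lintegral_const_mul' _ _ ENNReal.ofReal_ne_top]
    refine setLIntegral_mono' measurableSet_Ioo fun t ht => ?_
    have ht1 : 0 < 1 - t := sub_pos.mpr ht.2
    have ht0 := ht.1
    calc ENNReal.ofReal (t ^ (p - 1) * (1 - t) ^ (q - 1)) * ellK t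
      _ ≤ ENNReal.ofReal (t ^ (p - 1) * (1 - t) ^ (q - 1)) *
          (ENNReal.ofReal ((1 - t) ^ (-a)) * ENNReal.ofReal (betaFn (1 / 2) a)) := by
        gcongr
        exact ellK_le ha ha' ht
      _ = ENNReal.ofReal (betaFn (1 / 2) a) *
          ENNReal.ofReal (t ^ (p - 1) * (1 - t) ^ (q - a - 1)) := by
        rw [← mul_assoc, ← ENNReal.ofReal_mul (by positivity), mul_comm, mul_assoc,
          ← Real.rpow_add ht1]
        ring_nf
  exact ne_top_of_le_ne_top (by finiteness) hle

end Moments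

section Landen

lemma lintegral_Ioo_comp_mul_deriv {a b : ℝ} (hab : a ≤ b) {f f' : ℝ → ℝ}
    (hf : ContinuousOn f (Icc a b)) (hderiv : ∀ x ∈ Ioo a b, HasDerivAt f (f' x) x)
    (hpos : ∀ x ∈ Ioo a b, 0 < f' x) (u : ℝ → ℝ≥0∞) :
    ∫⁻ x in Ioo (f a) (f b), u x = ∫⁻ x in Ioo a b, ENNReal.ofReal (f' x) * u (f x) := by
  have hmono : StrictMonoOn f (Icc a b) := by
    refine strictMonoOn_of_deriv_pos (convex_Icc a b) hf fun x hx => ?_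
    rw [interior_Icc] at hx
    exact (hderiv x hx).deriv ▸ hpos x hx
  have himage : f '' Ioo a b = Ioo (f a) (f b) := by
    refine Subset.antisymm ?_ (intermediate_value_Ioo hab hf)
    rintro _ ⟨x, hx, rfl⟩
    have hx' := Ioo_subset_Icc_self hx
    exact ⟨hmono (left_mem_Icc.mpr hab) hx' hx.1, hmono hx' (right_mem_Icc.mpr hab) hx.2⟩
  rw [← himage]
  exact lintegral_image_eq_lintegral_deriv_mul_of_monotoneOn measurableSet_Ioo
    (fun x hx => (hderiv x hx).hasDerivWithinAt) (hmono.monotoneOn.mono Ioo_subset_Icc_self) u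

/-- Landen's substitution with modulus `k`, an increasing bijection of `[0, 1]` for `0 ≤ k ≤ 1`.
The map `landenMap 1`, which is `k ↦ 4 k / (1 + k) ^ 2`, is also the action of Landen's
transformation on the parameter. -/
noncomputable def landenMap (k y : ℝ) : ℝ := (1 + k) ^ 2 * y / (1 + k * y) ^ 2

lemma one_sub_landenMap {k y : ℝ} (hky : 1 + k * y ≠ 0) :
    1 - landenMap k y = (1 - y) * (1 - k ^ 2 * y) / (1 + k * y) ^ 2 := by
  rw [landenMap]
  field_simp
  ring

lemma one_sub_landenMap_one_mul_landenMap {k y : ℝ} (hk : 1 + k ≠ 0) (hky : 1 + k * y ≠ 0) :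
    1 - landenMap 1 k * landenMap k y = (1 - k * y) ^ 2 / (1 + k * y) ^ 2 := by
  simp only [landenMap, one_mul]
  field_simp
  ring

lemma lintegral_comp_landenMap {k : ℝ} (hk0 : 0 ≤ k) (hk1 : k ≤ 1) (u : ℝ → ℝ≥0∞) :
    ∫⁻ x in Ioo (0 : ℝ) 1, u x = ∫⁻ y in Ioo (0 : ℝ) 1,
      ENNReal.ofReal ((1 + k) ^ 2 * (1 - k * y) / (1 + k * y) ^ 3) * u (landenMap k y) := by
  have hden {y : ℝ} (hy : 0 ≤ y) : 0 < 1 + k * y := by positivity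
  have hzero : landenMap k 0 = 0 := by simp [landenMap]
  have hone : landenMap k 1 = 1 := by
    have := hden zero_le_one
    rw [landenMap, mul_one, mul_one, div_self (by rw [mul_one] at this; positivity)]
  have hderiv {y : ℝ} (hy : 0 < y) :
      HasDerivAt (landenMap k) ((1 + k) ^ 2 * (1 - k * y) / (1 + k * y) ^ 3) y := by
    have hky := (hden hy.le).ne'
    have hquot := ((hasDerivAt_id y).const_mul ((1 + k) ^ 2)).div
      ((((hasDerivAt_id y).const_mul k).const_add 1).pow 2) (pow_ne_zero 2 hky)
    refine hquot.congr_deriv ?_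
    simp only [id, Pi.pow_apply]
    field_simp
    ring
  rw [← lintegral_Ioo_comp_mul_deriv zero_le_one ?_ (fun y hy => hderiv hy.1) ?_ u, hzero, hone]
  · unfold landenMap
    exact ContinuousOn.div (by fun_prop) (by fun_prop) fun y hy => (pow_pos (hden hy.1) 2).ne'
  · intro y ⟨hy0, hy1⟩
    have hky : 0 < 1 - k * y := by nlinarith
    have := hden hy0.le
    positivity

lemma sq_mul_rpow_neg_half {a b : ℝ} (ha : 0 < a) (hb : 0 ≤ b) :
    (a ^ 2 * b) ^ (-1 / 2 : ℝ) = a⁻¹ * b ^ (-1 / 2 : ℝ) := by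
  rw [Real.mul_rpow (by positivity) hb, ← Real.rpow_natCast_mul ha.le, ← Real.rpow_neg_one]
  norm_num

lemma ellK_eq_lintegral_mul {t : ℝ} (ht : t ≤ 1) :
    ellK t = ∫⁻ y in Ioo (0 : ℝ) 1,
      ENNReal.ofReal ((y * (1 - y) * (1 - t * y)) ^ (-1 / 2 : ℝ)) := by
  refine setLIntegral_congr_fun measurableSet_Ioo fun y ⟨hy0, hy1⟩ => ?_
  have hy : 0 ≤ 1 - y := by linarith
  have hty : 0 ≤ 1 - t * y := by nlinarith
  simp only [Real.mul_rpow (mul_nonneg hy0.le hy) hty, Real.mul_rpow hy0.le hy]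

lemma ellK_landenMap_one {k : ℝ} (hk : k ∈ Ioo (0 : ℝ) 1) :
    ellK (landenMap 1 k) = ENNReal.ofReal (1 + k) * ellK (k ^ 2) := by
  obtain ⟨hk0, hk1⟩ := hk
  have hle : landenMap 1 k ≤ 1 := by
    rw [← sub_nonneg, one_sub_landenMap (by positivity)]
    exact div_nonneg (mul_nonneg (by linarith) (by linarith)) (sq_nonneg _)
  rw [ellK_eq_lintegral_mul hle, ellK_eq_lintegral_mul (pow_le_one₀ hk0.le hk1.le),
    ← lintegral_const_mul' _ _ ENNReal.ofReal_ne_top, lintegral_comp_landenMap hk0.le hk1.le]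
  refine setLIntegral_congr_fun measurableSet_Ioo fun y ⟨hy0, hy1⟩ => ?_
  have : 0 < 1 - y := sub_pos.mpr hy1
  have hky : 0 < 1 - k * y := by nlinarith
  have hkky : 0 < 1 - k ^ 2 * y := by nlinarith
  have hradicand : landenMap k y * (1 - landenMap k y) * (1 - landenMap 1 k * landenMap k y) =
      ((1 + k) * (1 - k * y) / (1 + k * y) ^ 3) ^ 2 * (y * (1 - y) * (1 - k ^ 2 * y)) := by
    rw [one_sub_landenMap (by positivity),
      one_sub_landenMap_one_mul_landenMap (by positivity) (by positivity), landenMap]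
    field_simp
  simp only [hradicand]
  rw [sq_mul_rpow_neg_half (by positivity) (by positivity), ← ENNReal.ofReal_mul (by positivity),
    ← ENNReal.ofReal_mul (by positivity)]
  congr 1
  field_simp

lemma ellMoment_eq_lintegral_sq (p q : ℝ) :
    ellMoment p q = ∫⁻ k in Ioo (0 : ℝ) 1,
      ENNReal.ofReal (2 * k ^ (2 * p - 1) * (1 - k ^ 2) ^ (q - 1)) * ellK (k ^ 2) := by
  have hsubst := lintegral_Ioo_comp_mul_deriv (f := fun k => k ^ 2) (f' := fun k => 2 * k)
    zero_le_one (by fun_prop) (fun k _ => by simpa using hasDerivAt_pow 2 k)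
    (fun k hk => mul_pos two_pos hk.1)
  rw [zero_pow two_ne_zero, one_pow] at hsubst
  rw [ellMoment, hsubst]
  refine setLIntegral_congr_fun measurableSet_Ioo fun k ⟨hk0, hk1⟩ => ?_
  have : 0 < 1 - k ^ 2 := by nlinarith
  rw [← mul_assoc, ← ENNReal.ofReal_mul (by positivity)]
  congr 2
  rw [← Real.rpow_natCast_mul hk0.le, show 2 * p - 1 = (2 : ℕ) * (p - 1) + 1 by push_cast; ring,
    Real.rpow_add_one hk0.ne']
  ring

lemma ellMoment_eq_lintegral_landen (p q : ℝ) :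
    ellMoment p q = ∫⁻ k in Ioo (0 : ℝ) 1, ENNReal.ofReal
      (4 ^ p * k ^ (p - 1) * (1 - k) ^ (2 * q - 1) * (1 + k) ^ (2 - 2 * p - 2 * q)) *
        ellK (k ^ 2) := by
  rw [ellMoment, lintegral_comp_landenMap zero_le_one le_rfl]
  refine setLIntegral_congr_fun measurableSet_Ioo fun k hk => ?_
  rw [ellK_landenMap_one hk, one_sub_landenMap (by linarith [hk.1]), landenMap]
  obtain ⟨hk0, hk1⟩ := hk
  have hminus : 0 < 1 - k := sub_pos.mpr hk1
  have hplus : 0 < 1 + k := by positivity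
  simp only [one_mul, one_pow, ← sq]
  rw [← mul_assoc, ← mul_assoc, ← ENNReal.ofReal_mul (by positivity),
    ← ENNReal.ofReal_mul (by positivity)]
  congr 2
  rw [show (1 + 1 : ℝ) ^ 2 = 4 by norm_num]
  have hfour : (0 : ℝ) < 4 := by norm_num
  -- Once every base is an exponential, the identity is linear in the exponents.
  generalize 1 - k = m at *
  generalize 1 + k = l at *
  generalize (4 : ℝ) = c at *
  obtain ⟨K, rfl⟩ : ∃ K, Real.exp K = k := ⟨_, Real.exp_log hk0⟩
  obtain ⟨M, rfl⟩ : ∃ M, Real.exp M = m := ⟨_, Real.exp_log hminus⟩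
  obtain ⟨L, rfl⟩ : ∃ L, Real.exp L = l := ⟨_, Real.exp_log hplus⟩
  obtain ⟨C, rfl⟩ : ∃ C, Real.exp C = c := ⟨_, Real.exp_log hfour⟩
  simp only [← Real.exp_nat_mul, ← Real.exp_add, ← Real.exp_sub, ← Real.exp_mul]
  congr 1
  push_cast
  ring

lemma ellMoment_landen_add (a : ℝ) :
    ellMoment a ((1 - a) / 2) = ENNReal.ofReal (4 ^ a / 2) *
      (ellMoment (a / 2) (1 - a) + ellMoment ((a + 1) / 2) (1 - a)) := by
  have hmeas := measurable_ellK
  rw [ellMoment_eq_lintegral_landen, ellMoment_eq_lintegral_sq, ellMoment_eq_lintegral_sq,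
    ← lintegral_add_left (by fun_prop), ← lintegral_const_mul' _ _ ENNReal.ofReal_ne_top]
  refine setLIntegral_congr_fun measurableSet_Ioo fun k ⟨hk0, hk1⟩ => ?_
  have hminus : 0 < 1 - k := sub_pos.mpr hk1
  have hplus : 0 < 1 + k := by positivity
  have hsq : 0 < 1 - k ^ 2 := by nlinarith
  rw [← add_mul, ← mul_assoc, ← ENNReal.ofReal_add (by positivity) (by positivity),
    ← ENNReal.ofReal_mul (by positivity)]
  congr 2
  rw [show 1 - k ^ 2 = (1 - k) * (1 + k) by ring, Real.mul_rpow hminus.le hplus.le,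
    show 2 * ((1 - a) / 2) - 1 = -a by ring, show 2 - 2 * a - 2 * ((1 - a) / 2) = -a + 1 by ring,
    show 2 * ((a + 1) / 2) - 1 = a - 1 + 1 by ring, show 2 * (a / 2) - 1 = a - 1 by ring,
    show 1 - a - 1 = -a by ring, Real.rpow_add_one hplus.ne', Real.rpow_add_one hk0.ne']
  ring

lemma ellMoment_landen_sub (a : ℝ) :
    ellMoment a (1 - a / 2) + ENNReal.ofReal (4 ^ a / 2) * ellMoment ((a + 1) / 2) (1 - a) =
      ENNReal.ofReal (4 ^ a / 2) * ellMoment (a / 2) (1 - a) := by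
  have hmeas := measurable_ellK
  rw [ellMoment_eq_lintegral_landen, ellMoment_eq_lintegral_sq, ellMoment_eq_lintegral_sq,
    ← lintegral_const_mul' _ _ ENNReal.ofReal_ne_top,
    ← lintegral_const_mul' _ _ ENNReal.ofReal_ne_top, ← lintegral_add_left (by fun_prop)]
  refine setLIntegral_congr_fun measurableSet_Ioo fun k ⟨hk0, hk1⟩ => ?_
  have hminus : 0 < 1 - k := sub_pos.mpr hk1
  have hplus : 0 < 1 + k := by positivity
  have hsq : 0 < 1 - k ^ 2 := by nlinarith
  rw [← mul_assoc, ← mul_assoc, ← ENNReal.ofReal_mul (by positivity),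
    ← ENNReal.ofReal_mul (by positivity), ← add_mul,
    ← ENNReal.ofReal_add (by positivity) (by positivity)]
  congr 2
  rw [show 1 - k ^ 2 = (1 - k) * (1 + k) by ring, Real.mul_rpow hminus.le hplus.le,
    show 2 * (1 - a / 2) - 1 = -a + 1 by ring, show 2 - 2 * a - 2 * (1 - a / 2) = -a by ring,
    show 2 * ((a + 1) / 2) - 1 = a - 1 + 1 by ring, show 2 * (a / 2) - 1 = a - 1 by ring,
    show 1 - a - 1 = -a by ring, Real.rpow_add_one hminus.ne', Real.rpow_add_one hk0.ne']
  ring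

end Landen

section Contour

open Complex

lemma integral_vertical_line_eq {f : ℂ → ℂ} {G : ℝ → ℝ}
    (hf : DifferentiableOn ℂ f {z | 0 < z.re})
    (hint : ∀ e : ℝ, 0 < e → Integrable fun t : ℝ => f (e + t * I))
    (hG : Tendsto G (cocompact ℝ) (𝓝 0))
    (hfG : ∀ᶠ t : ℝ in cocompact ℝ, ∀ e : ℝ, 0 < e → ‖f (e + t * I)‖ ≤ G t)
    {a b : ℝ} (ha : 0 < a) (hb : 0 < b) :
    ∫ t : ℝ, f (a + t * I) = ∫ t : ℝ, f (b + t * I) := by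
  have hhorizontal {s : ℝ} (hs : |s| = 1) :
      Tendsto (fun T : ℝ => ∫ x : ℝ in a..b, f (x + (s * T : ℝ) * I)) atTop (𝓝 0) := by
    have hsT : Tendsto (fun T : ℝ => s * T) atTop (cocompact ℝ) := by
      refine tendsto_cocompact_of_tendsto_dist_comp_atTop 0 ?_
      simpa [abs_mul, hs] using tendsto_abs_atTop_atTop
    have hlim := (hG.comp hsT).mul_const |b - a|
    rw [zero_mul] at hlim
    refine squeeze_zero_norm' ?_ hlim
    filter_upwards [hsT hfG] with T hT
    refine intervalIntegral.norm_integral_le_of_norm_le_const fun x hx => hT x ?_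
    rw [uIoc, mem_Ioc] at hx
    exact (lt_min ha hb).trans hx.1
  have hrectangle (T : ℝ) : (∫ x : ℝ in a..b, f (x + ((-1) * T : ℝ) * I)) -
      (∫ x : ℝ in a..b, f (x + (1 * T : ℝ) * I)) +
      I • (∫ y : ℝ in (-T)..T, f (b + y * I)) - I • (∫ y : ℝ in (-T)..T, f (a + y * I)) = 0 := by
    have hcauchy := Complex.integral_boundary_rect_eq_zero_of_differentiableOn f
      (⟨a, -T⟩ : ℂ) ⟨b, T⟩ (hf.mono fun z hz => ?_)
    · simpa using hcauchy
    · have hre := (mem_reProdIm.mp hz).1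
      rw [uIcc, mem_Icc] at hre
      exact (lt_min ha hb).trans_le hre.1
  have hvertical {e : ℝ} (he : 0 < e) := (intervalIntegral_tendsto_integral (hint e he)
    tendsto_neg_atTop_atBot tendsto_id).const_smul I
  have hlim := (((hhorizontal (s := -1) (by simp)).sub (hhorizontal (s := 1) (by simp))).add
    (hvertical hb)).sub (hvertical ha)
  simp only [id] at hlim
  have hzero := tendsto_nhds_unique ((tendsto_congr hrectangle).mp hlim) tendsto_const_nhds
  rw [sub_zero, zero_add, sub_eq_zero, smul_right_inj I_ne_zero] at hzero
  exact hzero.symm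

lemma integral_imaginary_axis_eq_zero {f : ℂ → ℂ} {G : ℝ → ℝ} {S : Set ℝ} (hS : S.Finite)
    (hf : DifferentiableOn ℂ f {z | 0 < z.re}) (hG : Integrable G)
    (hG0 : Tendsto G (cocompact ℝ) (𝓝 0))
    (hfG : ∀ t ∉ S, ∀ e : ℝ, 0 < e → ‖f (e + t * I)‖ ≤ G t)
    (hinf : ∀ t ∉ S, Tendsto (fun e : ℝ => f (e + t * I)) atTop (𝓝 0))
    (hzero : ∀ t ∉ S, Tendsto (fun e : ℝ => f (e + t * I)) (𝓝[>] 0) (𝓝 (f (t * I)))) :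
    ∫ t : ℝ, f (t * I) = 0 := by
  have hae : ∀ᵐ t : ℝ, t ∉ S := hS.countable.ae_notMem volume
  have hmeas {e : ℝ} (he : 0 < e) : AEStronglyMeasurable (fun t : ℝ => f (e + t * I)) := by
    refine (hf.continuousOn.comp_continuous (by fun_prop) fun t => ?_).aestronglyMeasurable
    simpa using he
  have hbound {e : ℝ} (he : 0 < e) : ∀ᵐ t : ℝ, ‖f (e + t * I)‖ ≤ G t :=
    hae.mono fun t ht => hfG t ht e he
  have hconst {e : ℝ} (he : 0 < e) :
      ∫ t : ℝ, f ((1 : ℝ) + t * I) = ∫ t : ℝ, f (e + t * I) :=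
    integral_vertical_line_eq hf (fun e he => hG.mono' (hmeas he) (hbound he)) hG0
      (Filter.mem_of_superset hS.isCompact.compl_mem_cocompact hfG) one_pos he
  have hone : ∫ t : ℝ, f ((1 : ℝ) + t * I) = 0 := by
    have hlim : Tendsto (fun e : ℝ => ∫ t : ℝ, f (e + t * I)) atTop (𝓝 (∫ _ : ℝ, (0 : ℂ))) :=
      tendsto_integral_filter_of_dominated_convergence G
        ((eventually_gt_atTop 0).mono fun _ => hmeas)
        ((eventually_gt_atTop 0).mono fun _ => hbound) hG (hae.mono hinf)
    rw [integral_zero] at hlim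
    exact tendsto_nhds_unique
      (tendsto_const_nhds.congr' ((eventually_gt_atTop 0).mono fun _ => hconst)) hlim
  have hlim : Tendsto (fun e : ℝ => ∫ t : ℝ, f (e + t * I)) (𝓝[>] 0) (𝓝 (∫ t : ℝ, f (t * I))) :=
    tendsto_integral_filter_of_dominated_convergence G
      (eventually_mem_nhdsWithin.mono fun _ => hmeas)
      (eventually_mem_nhdsWithin.mono fun _ => hbound) hG (hae.mono hzero)
  rw [← hone]
  exact tendsto_nhds_unique hlim
    (tendsto_const_nhds.congr' (eventually_mem_nhdsWithin.mono fun _ => hconst))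

lemma norm_add_mul_I_cpow_le {s b : ℝ} (hs : s ≠ 0) (hb : b ≤ 0) (e : ℝ) :
    ‖((e : ℂ) + s * I) ^ (b : ℂ)‖ ≤ |s| ^ b := by
  rw [norm_cpow_real]
  refine Real.rpow_le_rpow_of_nonpos (abs_pos.mpr hs) ?_ hb
  simpa using Complex.abs_im_le_norm (e + s * I)

lemma tendsto_add_mul_I_cpow_atTop {b c : ℝ} (hb : b < 0) (hc : 0 < c) (s : ℝ) :
    Tendsto (fun e : ℝ => (((c * e : ℝ) : ℂ) + s * I) ^ (b : ℂ)) atTop (𝓝 0) := by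
  rw [tendsto_zero_iff_norm_tendsto_zero]
  simp_rw [norm_cpow_real]
  have hnorm : Tendsto (fun e : ℝ => ‖((c * e : ℝ) : ℂ) + s * I‖) atTop atTop := by
    refine tendsto_atTop_mono (fun e => ?_) (tendsto_id.const_mul_atTop hc)
    simpa using Complex.re_le_norm (((c * e : ℝ) : ℂ) + s * I)
  simpa [Function.comp_def] using (tendsto_rpow_neg_atTop (neg_pos.mpr hb)).comp hnorm

lemma tendsto_add_mul_I_cpow_zero {s : ℝ} (hs : s ≠ 0) (b c : ℝ) :
    Tendsto (fun e : ℝ => (((c * e : ℝ) : ℂ) + s * I) ^ (b : ℂ)) (𝓝[>] 0)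
      (𝓝 ((s * I) ^ (b : ℂ))) := by
  have hslit : (s * I : ℂ) ∈ slitPlane := by
    rw [mem_slitPlane_iff]
    right
    simpa using hs
  have hcont : ContinuousAt (fun e : ℝ => (((c * e : ℝ) : ℂ) + s * I) ^ (b : ℂ)) 0 :=
    ContinuousAt.cpow (by fun_prop) (by fun_prop) (by simpa using hslit)
  simpa using hcont.tendsto.mono_left nhdsWithin_le_nhds

lemma tendsto_abs_mul_sub_rpow_cocompact {b c : ℝ} (hb : b < 0) (hc : 0 < c) (a : ℝ) :
    Tendsto (fun t : ℝ => |c * t - a| ^ b) (cocompact ℝ) (𝓝 0) := by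
  have habs : Tendsto (fun t : ℝ => |c * t - a|) (cocompact ℝ) atTop := by
    refine tendsto_atTop_mono (f := fun t : ℝ => c * ‖t‖ - |a|) (fun t => ?_)
      (tendsto_atTop_add_const_right _ _ (tendsto_norm_cocompact_atTop.const_mul_atTop hc))
    simpa [abs_mul, abs_of_pos hc] using abs_sub_abs_le_abs_sub (c * t) a
  simpa [Function.comp_def] using (tendsto_rpow_neg_atTop (neg_pos.mpr hb)).comp habs

lemma ofReal_mul_I_cpow {b : ℝ} (hb : b ≠ 0) (s : ℝ) :
    ((s : ℂ) * I) ^ (b : ℂ) =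
      ((|s| ^ b : ℝ) : ℂ) * exp ((Real.pi / 2 * (b * Real.sign s) : ℝ) * I) := by
  have hpos {s : ℝ} (hs : 0 < s) : ((|s| ^ b : ℝ) : ℂ) = exp (Real.log s * b : ℝ) := by
    rw [abs_of_pos hs, Real.rpow_def_of_pos hs, ofReal_exp]
  rcases lt_trichotomy s 0 with hs | rfl | hs
  · rw [← abs_neg, hpos (neg_pos.mpr hs), Real.sign_of_neg hs,
      show (s : ℂ) * I = ((-s : ℝ) : ℂ) * (-I) by push_cast; ring,
      cpow_def_of_ne_zero (by simp [hs.ne]),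
      log_ofReal_mul (neg_pos.mpr hs) (neg_ne_zero.mpr I_ne_zero), log_neg_I, ← exp_add]
    push_cast
    ring_nf
  · simp [hb]
  · rw [hpos hs, Real.sign_of_pos hs, cpow_def_of_ne_zero (by simp [hs.ne']),
      log_ofReal_mul hs I_ne_zero, log_I, ← exp_add]
    push_cast
    ring_nf

variable {ι : Type*} [Fintype ι] [Nonempty ι] {b c : ι → ℝ}

lemma integral_prod_ofReal_mul_I_cpow_eq_zero (hb : ∀ i, b i < 0) (hc : ∀ i, 0 < c i) (a : ι → ℝ)
    (hint : Integrable fun t => ∏ i, |c i * t - a i| ^ b i) :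
    ∫ t : ℝ, ∏ i, (((c i * t - a i : ℝ) : ℂ) * I) ^ (b i : ℂ) = 0 := by
  have hprod {l : Filter ℝ} {f : ι → ℝ → ℂ} (h : ∀ i, Tendsto (f i) l (𝓝 0)) :
      Tendsto (fun t => ∏ i, f i t) l (𝓝 0) := by
    simpa using tendsto_finsetProd Finset.univ fun i _ => h i
  have hne {t : ℝ} (ht : t ∉ range fun i => a i / c i) (i : ι) : c i * t - a i ≠ 0 := by
    rw [sub_ne_zero, Ne, mul_comm, ← eq_div_iff (hc i).ne']
    exact fun h => ht ⟨i, h.symm⟩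
  have hvertical (e t : ℝ) (i : ι) : (c i * (e + t * I) - a i * I : ℂ) =
      ((c i * e : ℝ) : ℂ) + (c i * t - a i : ℝ) * I := by
    push_cast
    ring
  have haxis (t : ℝ) (i : ι) : (c i * (t * I) - a i * I : ℂ) = (c i * t - a i : ℝ) * I := by
    push_cast
    ring
  have hzero := integral_imaginary_axis_eq_zero (finite_range fun i => a i / c i)
    (f := fun w => ∏ i, (c i * w - a i * I) ^ (b i : ℂ)) ?_ hint ?_ ?_ ?_ ?_
  · simpa only [haxis] using hzero
  · intro w hw
    refine DifferentiableAt.differentiableWithinAt (.fun_finsetProd fun i _ => ?_)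
    have hslit : c i * w - a i * I ∈ slitPlane := Or.inl (by simpa using mul_pos (hc i) hw)
    fun_prop (disch := assumption)
  · simpa using tendsto_finsetProd Finset.univ
      fun i _ => tendsto_abs_mul_sub_rpow_cocompact (hb i) (hc i) (a i)
  · intro t ht e _
    rw [norm_prod]
    refine Finset.prod_le_prod (fun _ _ => norm_nonneg _) fun i _ => ?_
    rw [hvertical]
    exact norm_add_mul_I_cpow_le (hne ht i) (hb i).le _
  · intro t _
    simp only [hvertical]
    exact hprod fun i => tendsto_add_mul_I_cpow_atTop (hb i) (hc i) _
  · intro t ht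
    simp only [hvertical, haxis]
    exact tendsto_finsetProd _ fun i _ => tendsto_add_mul_I_cpow_zero (hne ht i) _ _

lemma integral_prod_abs_rpow_mul_sin_eq_zero (hb : ∀ i, b i < 0) (hc : ∀ i, 0 < c i) (a : ι → ℝ)
    (hint : Integrable fun t => ∏ i, |c i * t - a i| ^ b i) (φ : ℝ) :
    ∫ t : ℝ, (∏ i, |c i * t - a i| ^ b i) *
      Real.sin (φ + Real.pi / 2 * ∑ i, b i * Real.sign (c i * t - a i)) = 0 := by
  set g : ℝ → ℂ := fun t => exp (φ * I) * ∏ i, (((c i * t - a i : ℝ) : ℂ) * I) ^ (b i : ℂ) with hg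
  have hpolar (t : ℝ) : g t = ((∏ i, |c i * t - a i| ^ b i : ℝ) : ℂ) *
      exp ((φ + Real.pi / 2 * ∑ i, b i * Real.sign (c i * t - a i) : ℝ) * I) := by
    simp only [hg, ofReal_mul_I_cpow (hb _).ne, Finset.prod_mul_distrib, ← exp_sum]
    rw [mul_left_comm, ← exp_add, ← Finset.sum_mul, ← add_mul, Finset.mul_sum]
    push_cast
    rfl
  have hgint : Integrable g := by
    refine hint.mono' (Measurable.aestronglyMeasurable (by fun_prop)) (ae_of_all _ fun t => ?_)
    rw [hpolar, norm_mul, norm_exp_ofReal_mul_I, mul_one, norm_real, Real.norm_of_nonneg]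
    positivity
  calc ∫ t : ℝ, (∏ i, |c i * t - a i| ^ b i) *
        Real.sin (φ + Real.pi / 2 * ∑ i, b i * Real.sign (c i * t - a i))
    _ = ∫ t : ℝ, (g t).im := by simp only [hpolar, im_ofReal_mul, exp_ofReal_mul_I_im]
    _ = (∫ t : ℝ, g t).im := integral_im hgint
    _ = 0 := by
      rw [hg, integral_const_mul, integral_prod_ofReal_mul_I_cpow_eq_zero hb hc a hint, mul_zero,
        zero_im]

end Contour

section EulerKernel

/-- The modulus of the Euler integrand `t ^ (p - 1) (1 - t) ^ (q - 1) (1 - x t) ^ (-1 / 2)`,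
on the whole real line. It vanishes at the branch points `0`, `1` and `x⁻¹` because `0 ^ b = 0` for
`b ≠ 0`. -/
noncomputable def eulerKernel (p q x t : ℝ) : ℝ :=
  |t| ^ (p - 1) * |t - 1| ^ (q - 1) * |x * t - 1| ^ (-1 / 2 : ℝ)

/-- The argument of the Euler integrand on the real line, continued through one side of its branch
points and rotated so that it is a multiple of `π` for `t < 0` when `p + q + r = 3 / 2`. -/
noncomputable def eulerPhase (p q r x t : ℝ) : ℝ :=
  -(Real.pi / 2 * (1 + r)) + Real.pi / 2 *
    ((p - 1) * Real.sign t + (q - 1) * Real.sign (t - 1) + -1 / 2 * Real.sign (x * t - 1))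

lemma integral_eulerKernel_mul_sin_eulerPhase {p q x : ℝ} (hp : p < 1) (hq : q < 1) (hx : 0 < x)
    (hint : Integrable (eulerKernel p q x)) (r : ℝ) :
    ∫ t, eulerKernel p q x t * Real.sin (eulerPhase p q r x t) = 0 := by
  have hkernel (t : ℝ) : eulerKernel p q x t =
      ∏ i, |(![1, 1, x] i) * t - ![0, 1, 1] i| ^ ![p - 1, q - 1, -1 / 2] i := by
    simp [Fin.prod_univ_three, eulerKernel]
  have hphase (t : ℝ) : eulerPhase p q r x t = -(Real.pi / 2 * (1 + r)) + Real.pi / 2 *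
      ∑ i, ![p - 1, q - 1, -1 / 2] i * Real.sign (![1, 1, x] i * t - ![0, 1, 1] i) := by
    simp [Fin.sum_univ_three, eulerPhase]
  simp only [hphase, hkernel]
  refine integral_prod_abs_rpow_mul_sin_eq_zero ?_ ?_ _ ?_ _
  · norm_num [Fin.forall_fin_succ, hp, hq]
  · simp [Fin.forall_fin_succ, hx]
  · simpa only [← hkernel] using hint

lemma sin_eulerPhase_of_lt_zero {p q r x t : ℝ} (hpqr : p + q + r = 3 / 2) (hx : 0 < x)
    (ht : t < 0) : Real.sin (eulerPhase p q r x t) = 0 := by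
  rw [eulerPhase, Real.sign_of_neg ht, Real.sign_of_neg (by linarith),
    Real.sign_of_neg (by nlinarith), show r = 3 / 2 - p - q by linarith]
  ring_nf
  exact Real.sin_zero

lemma sin_eulerPhase_of_mem_Ioo_zero_one {p q r x t : ℝ} (hpqr : p + q + r = 3 / 2) (hx : x < 1)
    (ht : t ∈ Ioo 0 1) : Real.sin (eulerPhase p q r x t) = -Real.sin (Real.pi * p) := by
  rw [eulerPhase, Real.sign_of_pos ht.1, Real.sign_of_neg (by linarith [ht.2]),
    Real.sign_of_neg (by nlinarith [ht.1, ht.2]), ← Real.sin_sub_pi,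
    show r = 3 / 2 - p - q by linarith]
  ring_nf

lemma sin_eulerPhase_of_mem_Ioo_one_inv {p q r x t : ℝ} (hpqr : p + q + r = 3 / 2) (hx : 0 < x)
    (ht : t ∈ Ioo 1 x⁻¹) : Real.sin (eulerPhase p q r x t) = -Real.cos (Real.pi * r) := by
  have hxt : x * t < 1 := (lt_inv_mul_iff₀ hx).mp (by simpa using ht.2)
  rw [eulerPhase, Real.sign_of_pos (one_pos.trans ht.1), Real.sign_of_pos (by linarith [ht.1]),
    Real.sign_of_neg (by linarith), ← Real.sin_add_pi_div_two, ← Real.sin_neg,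
    show r = 3 / 2 - p - q by linarith]
  ring_nf

lemma sin_eulerPhase_of_inv_lt {p q r x t : ℝ} (hpqr : p + q + r = 3 / 2) (hx : x ∈ Ioo 0 1)
    (ht : x⁻¹ < t) : Real.sin (eulerPhase p q r x t) = Real.sin (Real.pi * r) := by
  have hxt : 1 < x * t := (inv_mul_lt_iff₀ hx.1).mp (by simpa using ht)
  have hx1 : 1 < x⁻¹ := (one_lt_inv₀ hx.1).mpr hx.2
  rw [eulerPhase, Real.sign_of_pos (by linarith), Real.sign_of_pos (by linarith),
    Real.sign_of_pos (by linarith), ← neg_neg (Real.sin (Real.pi * r)), ← Real.sin_add_pi,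
    ← Real.sin_neg, show r = 3 / 2 - p - q by linarith]
  ring_nf

end EulerKernel

section DoubleEulerIntegral

lemma setLIntegral_preimage_one_sub (s : Set ℝ) (u : ℝ → ℝ≥0∞) :
    ∫⁻ x in (fun x => 1 - x) ⁻¹' s, u (1 - x) = ∫⁻ x in s, u x :=
  (Measure.measurePreserving_sub_left volume 1).setLIntegral_comp_preimage_emb
    (MeasurableEquiv.subLeft 1).measurableEmbedding u s

lemma lintegral_Ioo_one_sub (u : ℝ → ℝ≥0∞) :
    ∫⁻ x in Ioo (0 : ℝ) 1, u (1 - x) = ∫⁻ x in Ioo (0 : ℝ) 1, u x := by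
  simpa using setLIntegral_preimage_one_sub (Ioo 0 1) u

lemma lintegral_Ioi_one_sub (u : ℝ → ℝ≥0∞) :
    ∫⁻ x in Ioi (1 : ℝ), u (1 - x) = ∫⁻ x in Iio (0 : ℝ), u x := by
  simpa using setLIntegral_preimage_one_sub (Iio 0) u

lemma lintegral_Ioo_eq_affine {a b : ℝ} (hab : a < b) (u : ℝ → ℝ≥0∞) :
    ∫⁻ x in Ioo a b, u x =
      ∫⁻ y in Ioo (0 : ℝ) 1, ENNReal.ofReal (b - a) * u ((b - a) * y + a) := by
  simpa using lintegral_Ioo_comp_mul_deriv zero_le_one (f := fun y => (b - a) * y + a)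
    (f' := fun _ => b - a) (by fun_prop)
    (fun x _ => by simpa using ((hasDerivAt_id x).const_mul (b - a)).add_const a)
    (fun _ _ => sub_pos.mpr hab) u

lemma lintegral_Ioi_one_eq_inv (u : ℝ → ℝ≥0∞) :
    ∫⁻ t in Ioi (1 : ℝ), u t = ∫⁻ y in Ioo (0 : ℝ) 1, ENNReal.ofReal (y ^ (-2 : ℝ)) * u y⁻¹ := by
  have himage : (fun y : ℝ => y⁻¹) '' Ioo 0 1 = Ioi 1 := by
    rw [image_inv_eq_inv, inv_Ioo_0_left one_pos, inv_one]
  rw [← himage, lintegral_image_eq_lintegral_abs_deriv_mul (f' := fun y => -(y ^ 2)⁻¹)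
    measurableSet_Ioo (fun x hx => (hasDerivAt_inv hx.1.ne').hasDerivWithinAt)
    inv_injective.injOn]
  refine setLIntegral_congr_fun measurableSet_Ioo fun y hy => ?_
  rw [abs_neg, abs_of_nonneg (by positivity), Real.rpow_neg hy.1.le, Real.rpow_two]

lemma lintegral_Ioi_one_beta {p q r : ℝ} (hpqr : p + q + r = 3 / 2) (h : ℝ → ℝ≥0∞) :
    ∫⁻ t in Ioi (1 : ℝ),
      ENNReal.ofReal (t ^ (p - 1) * (t - 1) ^ (q - 1) * t ^ (-1 / 2 : ℝ)) * h t⁻¹ =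
    ∫⁻ u in Ioo (0 : ℝ) 1, ENNReal.ofReal (u ^ (r - 1) * (1 - u) ^ (q - 1)) * h u := by
  rw [lintegral_Ioi_one_eq_inv]
  refine setLIntegral_congr_fun measurableSet_Ioo fun u ⟨hu0, hu1⟩ => ?_
  have h1 : 0 < 1 - u := sub_pos.mpr hu1
  rw [inv_inv, ← mul_assoc, ← ENNReal.ofReal_mul (by positivity)]
  congr 2
  rw [show u⁻¹ - 1 = (1 - u) * u⁻¹ by field_simp, Real.mul_rpow h1.le (by positivity),
    Real.inv_rpow hu0.le, Real.inv_rpow hu0.le, Real.inv_rpow hu0.le, ← Real.rpow_neg hu0.le,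
    ← Real.rpow_neg hu0.le, ← Real.rpow_neg hu0.le,
    show r - 1 = -2 + -(p - 1) + -(q - 1) + -(-1 / 2) by linarith, Real.rpow_add hu0,
    Real.rpow_add hu0, Real.rpow_add hu0]
  ring

lemma lintegral_beta_mul_ellK_one_sub (p q : ℝ) :
    ∫⁻ u in Ioo (0 : ℝ) 1, ENNReal.ofReal (u ^ (p - 1) * (1 - u) ^ (q - 1)) * ellK (1 - u) =
      ellMoment q p := by
  rw [ellMoment, ← lintegral_Ioo_one_sub]
  simp only [sub_sub_cancel, mul_comm]

/-- The modulus, on the plane, of the integrand of the double Euler integral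
`∫∫ x ^ (-1 / 2) (1 - x) ^ (-1 / 2) t ^ (p - 1) (1 - t) ^ (q - 1) (1 - x t) ^ (-1 / 2) dx dt`
for `ellMoment p q`. -/
noncomputable def doubleEulerKernel (p q : ℝ) (z : ℝ × ℝ) : ℝ :=
  |z.1| ^ (-1 / 2 : ℝ) * |1 - z.1| ^ (-1 / 2 : ℝ) * eulerKernel p q z.1 z.2

lemma doubleEulerKernel_nonneg (p q : ℝ) (z : ℝ × ℝ) : 0 ≤ doubleEulerKernel p q z := by
  unfold doubleEulerKernel eulerKernel
  positivity

lemma measurable_doubleEulerKernel (p q : ℝ) : Measurable (doubleEulerKernel p q) := by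
  unfold doubleEulerKernel eulerKernel
  fun_prop

lemma lintegral_doubleEulerKernel_of_mem_Ioo (p q : ℝ) {t : ℝ} (ht : t ∈ Ioo (0 : ℝ) 1) :
    ∫⁻ x in Ioo (0 : ℝ) 1, ENNReal.ofReal (doubleEulerKernel p q (x, t)) =
      ENNReal.ofReal (t ^ (p - 1) * (1 - t) ^ (q - 1)) * ellK t := by
  obtain ⟨ht0, ht1⟩ := ht
  have h1 : 0 < 1 - t := sub_pos.mpr ht1
  rw [ellK, ← lintegral_const_mul' _ _ ENNReal.ofReal_ne_top]
  refine setLIntegral_congr_fun measurableSet_Ioo fun x ⟨hx0, hx1⟩ => ?_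
  have h2 : 0 < 1 - x := sub_pos.mpr hx1
  have h3 : 0 < 1 - t * x := by nlinarith
  rw [← ENNReal.ofReal_mul (by positivity)]
  simp only [doubleEulerKernel, eulerKernel]
  rw [abs_of_pos hx0, abs_of_pos h2, abs_of_pos ht0, abs_sub_comm, abs_of_pos h1, mul_comm x t,
    abs_sub_comm, abs_of_pos h3]
  ring_nf

lemma lintegral_doubleEulerKernel_one_sub (p q : ℝ) {t : ℝ} (ht : 1 < t) :
    ∫⁻ x in Ioo (0 : ℝ) 1, ENNReal.ofReal (doubleEulerKernel p q (x, 1 - t)) =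
      ENNReal.ofReal (t ^ (q - 1) * (t - 1) ^ (p - 1) * t ^ (-1 / 2 : ℝ)) * ellK (1 - t⁻¹) := by
  have ht0 : 0 < t := one_pos.trans ht
  have h1 : 0 < t - 1 := sub_pos.mpr ht
  rw [← lintegral_Ioo_one_sub, ellK, ← lintegral_const_mul' _ _ ENNReal.ofReal_ne_top]
  refine setLIntegral_congr_fun measurableSet_Ioo fun y ⟨hy0, hy1⟩ => ?_
  have h2 : 0 < 1 - y := sub_pos.mpr hy1
  have h3 : 0 < 1 - (1 - t⁻¹) * y := by nlinarith [inv_pos.mpr ht0]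
  rw [← ENNReal.ofReal_mul (by positivity)]
  simp only [doubleEulerKernel, eulerKernel]
  rw [sub_sub_cancel, abs_of_pos h2, abs_of_pos hy0, abs_sub_comm, abs_of_pos h1,
    sub_sub_cancel_left, abs_neg, abs_of_pos ht0,
    show (1 - y) * (1 - t) - 1 = -(t * (1 - (1 - t⁻¹) * y)) by field_simp; ring, abs_neg,
    abs_of_pos (by positivity), Real.mul_rpow ht0.le h3.le]
  ring_nf

lemma lintegral_doubleEulerKernel_Ioo_zero_inv (p q : ℝ) {t : ℝ} (ht : 1 < t) :
    ∫⁻ x in Ioo 0 t⁻¹, ENNReal.ofReal (doubleEulerKernel p q (x, t)) =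
      ENNReal.ofReal (t ^ (p - 1) * (t - 1) ^ (q - 1) * t ^ (-1 / 2 : ℝ)) * ellK t⁻¹ := by
  have ht0 : 0 < t := one_pos.trans ht
  have hi : t⁻¹ < 1 := inv_lt_one_of_one_lt₀ ht
  have h1 : 0 < t - 1 := sub_pos.mpr ht
  rw [lintegral_Ioo_eq_affine (inv_pos.mpr ht0), ellK,
    ← lintegral_const_mul' _ _ ENNReal.ofReal_ne_top]
  refine setLIntegral_congr_fun measurableSet_Ioo fun y ⟨hy0, hy1⟩ => ?_
  have h2 : 0 < 1 - y := sub_pos.mpr hy1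
  have h3 : 0 < 1 - t⁻¹ * y := by nlinarith
  rw [← ENNReal.ofReal_mul (by simpa using ht0.le), ← ENNReal.ofReal_mul (by positivity)]
  simp only [doubleEulerKernel, eulerKernel, sub_zero, add_zero]
  rw [abs_of_pos (by positivity), abs_of_pos h3, abs_of_pos ht0, abs_of_pos h1,
    show t⁻¹ * y * t - 1 = -(1 - y) by field_simp; ring, abs_neg, abs_of_pos h2,
    Real.mul_rpow (by positivity) hy0.le]
  have h4 : t⁻¹ * t⁻¹ ^ (-1 / 2 : ℝ) = t ^ (-1 / 2 : ℝ) := by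
    rw [Real.inv_rpow ht0.le, ← Real.rpow_neg ht0.le, ← Real.rpow_neg_one, ← Real.rpow_add ht0]
    norm_num
  rw [← h4]
  ring_nf

lemma lintegral_doubleEulerKernel_Ioo_inv_one (p q : ℝ) {t : ℝ} (ht : 1 < t) :
    ∫⁻ x in Ioo t⁻¹ 1, ENNReal.ofReal (doubleEulerKernel p q (x, t)) =
      ENNReal.ofReal (t ^ (p - 1) * (t - 1) ^ (q - 1) * t ^ (-1 / 2 : ℝ)) * ellK (1 - t⁻¹) := by
  have ht0 : 0 < t := one_pos.trans ht
  have hti : 0 < t⁻¹ := inv_pos.mpr ht0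
  have hi : t⁻¹ < 1 := inv_lt_one_of_one_lt₀ ht
  have h1 : 0 < t - 1 := sub_pos.mpr ht
  have h1' : 0 < 1 - t⁻¹ := sub_pos.mpr hi
  rw [lintegral_Ioo_eq_affine hi, ← lintegral_Ioo_one_sub, ellK,
    ← lintegral_const_mul' _ _ ENNReal.ofReal_ne_top]
  refine setLIntegral_congr_fun measurableSet_Ioo fun y ⟨hy0, hy1⟩ => ?_
  have h2 : 0 < 1 - y := sub_pos.mpr hy1
  have h3 : 0 < 1 - (1 - t⁻¹) * y := by nlinarith
  rw [← ENNReal.ofReal_mul h1'.le, ← ENNReal.ofReal_mul (by positivity)]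
  simp only [doubleEulerKernel, eulerKernel]
  rw [show (1 - t⁻¹) * (1 - y) + t⁻¹ = 1 - (1 - t⁻¹) * y by ring, sub_sub_cancel, abs_of_pos h3,
    abs_of_pos (mul_pos h1' hy0), abs_of_pos ht0, abs_of_pos h1,
    show (1 - (1 - t⁻¹) * y) * t - 1 = (1 - t⁻¹) * t * (1 - y) by field_simp; ring,
    abs_of_pos (by positivity), Real.mul_rpow h1'.le hy0.le, Real.mul_rpow (by positivity) h2.le,
    Real.mul_rpow h1'.le ht0.le]
  have h4 : (1 - t⁻¹) * ((1 - t⁻¹) ^ (-1 / 2 : ℝ) * (1 - t⁻¹) ^ (-1 / 2 : ℝ)) = 1 := by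
    rw [← Real.rpow_add h1', add_halves, Real.rpow_neg_one, mul_inv_cancel₀ h1'.ne']
  congr 1
  linear_combination (t ^ (p - 1) * (t - 1) ^ (q - 1) * t ^ (-1 / 2 : ℝ) *
    (y ^ (-1 / 2 : ℝ) * (1 - y) ^ (-1 / 2 : ℝ) * (1 - (1 - t⁻¹) * y) ^ (-1 / 2 : ℝ))) * h4

lemma setLIntegral_eq_lintegral_sections {S : Set (ℝ × ℝ)} {C : Set ℝ} {D : ℝ → Set ℝ}
    (hS : MeasurableSet S) (hC : MeasurableSet C) (hD : ∀ t, MeasurableSet (D t))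
    (hmem : ∀ x t, (x, t) ∈ S ↔ t ∈ C ∧ x ∈ D t) {f : ℝ × ℝ → ℝ≥0∞} (hf : Measurable f) :
    ∫⁻ z in S, f z = ∫⁻ t in C, ∫⁻ x in D t, f (x, t) := by
  rw [← lintegral_indicator hS, Measure.volume_eq_prod, lintegral_prod_symm' _ (hf.indicator hS),
    ← lintegral_indicator hC]
  refine lintegral_congr fun t => ?_
  by_cases ht : t ∈ C
  · rw [indicator_of_mem ht, ← lintegral_indicator (hD t)]
    exact lintegral_congr fun x => indicator_eq_indicator (by simp [hmem, ht]) rfl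
  · simp [indicator, hmem, ht]

/-- The part of the strip `0 < x < 1` of the `(x, t)`-plane where `t ∈ B x`. The branch points
`0`, `1` and `x⁻¹` of the Euler integrand cut the strip into four such regions. -/
def stripOver (B : ℝ → Set ℝ) : Set (ℝ × ℝ) := {z | z.1 ∈ Ioo 0 1 ∧ z.2 ∈ B z.1}

lemma mem_stripOver {B : ℝ → Set ℝ} {x t : ℝ} :
    (x, t) ∈ stripOver B ↔ x ∈ Ioo 0 1 ∧ t ∈ B x := Iff.rfl

lemma measurableSet_stripOver_Iio : MeasurableSet (stripOver fun _ => Iio 0) :=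
  measurableSet_Ioo.prod measurableSet_Iio

lemma measurableSet_stripOver_Ioo : MeasurableSet (stripOver fun _ => Ioo 0 1) :=
  measurableSet_Ioo.prod measurableSet_Ioo

lemma measurableSet_stripOver_Ioo_inv : MeasurableSet (stripOver fun x => Ioo 1 x⁻¹) :=
  (measurable_fst measurableSet_Ioo).inter
    ((measurable_snd measurableSet_Ioi).inter (measurableSet_lt measurable_snd measurable_fst.inv))

lemma measurableSet_stripOver_Ioi_inv : MeasurableSet (stripOver fun x => Ioi x⁻¹) :=
  (measurable_fst measurableSet_Ioo).inter (measurableSet_lt measurable_fst.inv measurable_snd)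

lemma mem_stripOver_Ioo_inv_iff (x t : ℝ) :
    (x, t) ∈ stripOver (fun x => Ioo 1 x⁻¹) ↔ t ∈ Ioi 1 ∧ x ∈ Ioo 0 t⁻¹ := by
  simp only [mem_stripOver, mem_Ioo, mem_Ioi]
  constructor
  · rintro ⟨⟨hx0, -⟩, ht1, htx⟩
    exact ⟨ht1, hx0, (lt_inv_comm₀ hx0 (one_pos.trans ht1)).mpr htx⟩
  · rintro ⟨ht1, hx0, hxt⟩
    exact ⟨⟨hx0, hxt.trans (inv_lt_one_of_one_lt₀ ht1)⟩, ht1,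
      (lt_inv_comm₀ hx0 (one_pos.trans ht1)).mp hxt⟩

lemma mem_stripOver_Ioi_inv_iff (x t : ℝ) :
    (x, t) ∈ stripOver (fun x => Ioi x⁻¹) ↔ t ∈ Ioi 1 ∧ x ∈ Ioo t⁻¹ 1 := by
  simp only [mem_stripOver, mem_Ioo, mem_Ioi]
  constructor
  · rintro ⟨⟨hx0, hx1⟩, hxt⟩
    have ht : 1 < t := ((one_lt_inv₀ hx0).mpr hx1).trans hxt
    exact ⟨ht, (inv_lt_comm₀ hx0 (one_pos.trans ht)).mp hxt, hx1⟩
  · rintro ⟨ht1, htx, hx1⟩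
    have hx0 : 0 < x := (inv_pos.mpr (one_pos.trans ht1)).trans htx
    exact ⟨⟨hx0, hx1⟩, (inv_lt_comm₀ hx0 (one_pos.trans ht1)).mpr htx⟩

lemma lintegral_doubleEulerKernel_stripOver_Iio {p q r : ℝ} (hpqr : p + q + r = 3 / 2) :
    ∫⁻ z in stripOver (fun _ => Iio 0), ENNReal.ofReal (doubleEulerKernel p q z) =
      ellMoment p r := by
  rw [setLIntegral_eq_lintegral_sections measurableSet_stripOver_Iio measurableSet_Iio
    (fun _ => measurableSet_Ioo) (fun _ _ => and_comm)
    (measurable_doubleEulerKernel p q).ennreal_ofReal, ← lintegral_Ioi_one_sub,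
    setLIntegral_congr_fun measurableSet_Ioi fun t => lintegral_doubleEulerKernel_one_sub p q,
    lintegral_Ioi_one_beta (r := r) (by linarith) fun u => ellK (1 - u),
    lintegral_beta_mul_ellK_one_sub]

lemma lintegral_doubleEulerKernel_stripOver_Ioo (p q : ℝ) :
    ∫⁻ z in stripOver (fun _ => Ioo 0 1), ENNReal.ofReal (doubleEulerKernel p q z) =
      ellMoment p q := by
  rw [setLIntegral_eq_lintegral_sections measurableSet_stripOver_Ioo measurableSet_Ioo
    (fun _ => measurableSet_Ioo) (fun _ _ => and_comm)
    (measurable_doubleEulerKernel p q).ennreal_ofReal]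
  exact setLIntegral_congr_fun measurableSet_Ioo fun t =>
    lintegral_doubleEulerKernel_of_mem_Ioo p q

lemma lintegral_doubleEulerKernel_stripOver_Ioo_inv {p q r : ℝ} (hpqr : p + q + r = 3 / 2) :
    ∫⁻ z in stripOver (fun x => Ioo 1 x⁻¹), ENNReal.ofReal (doubleEulerKernel p q z) =
      ellMoment r q := by
  rw [setLIntegral_eq_lintegral_sections measurableSet_stripOver_Ioo_inv measurableSet_Ioi
    (fun _ => measurableSet_Ioo) mem_stripOver_Ioo_inv_iff
    (measurable_doubleEulerKernel p q).ennreal_ofReal,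
    setLIntegral_congr_fun measurableSet_Ioi fun t => lintegral_doubleEulerKernel_Ioo_zero_inv p q,
    lintegral_Ioi_one_beta hpqr ellK, ellMoment]

lemma lintegral_doubleEulerKernel_stripOver_Ioi_inv {p q r : ℝ} (hpqr : p + q + r = 3 / 2) :
    ∫⁻ z in stripOver (fun x => Ioi x⁻¹), ENNReal.ofReal (doubleEulerKernel p q z) =
      ellMoment q r := by
  rw [setLIntegral_eq_lintegral_sections measurableSet_stripOver_Ioi_inv measurableSet_Ioi
    (fun _ => measurableSet_Ioo) mem_stripOver_Ioi_inv_iff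
    (measurable_doubleEulerKernel p q).ennreal_ofReal,
    setLIntegral_congr_fun measurableSet_Ioi fun t => lintegral_doubleEulerKernel_Ioo_inv_one p q,
    lintegral_Ioi_one_beta hpqr fun u => ellK (1 - u), lintegral_beta_mul_ellK_one_sub]

lemma disjoint_stripOver {B B' : ℝ → Set ℝ} (h : ∀ x ∈ Ioo 0 1, ∀ t ∈ B x, t ∉ B' x) :
    Disjoint (stripOver B) (stripOver B') :=
  disjoint_left.mpr fun z hz hz' => h z.1 hz.1 z.2 hz.2 hz'.2

lemma setIntegral_strip_eq_add {f : ℝ × ℝ → ℝ}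
    (hf : ∀ x t, t = 0 ∨ t = 1 ∨ t = x⁻¹ → f (x, t) = 0)
    (h₀ : IntegrableOn f (stripOver fun _ => Iio 0))
    (h₁ : IntegrableOn f (stripOver fun _ => Ioo 0 1))
    (h₂ : IntegrableOn f (stripOver fun x => Ioo 1 x⁻¹))
    (h₃ : IntegrableOn f (stripOver fun x => Ioi x⁻¹)) :
    IntegrableOn f (Ioo 0 1 ×ˢ univ) ∧ ∫ z in Ioo 0 1 ×ˢ univ, f z =
      (∫ z in stripOver (fun _ => Iio 0), f z) + (∫ z in stripOver (fun _ => Ioo 0 1), f z) +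
      (∫ z in stripOver (fun x => Ioo 1 x⁻¹), f z) + ∫ z in stripOver (fun x => Ioi x⁻¹), f z := by
  have hinv {x : ℝ} (hx : x ∈ Ioo (0 : ℝ) 1) : 1 < x⁻¹ := (one_lt_inv₀ hx.1).mpr hx.2
  have d₁ : Disjoint (stripOver fun _ => Iio 0) (stripOver fun _ => Ioo 0 1) :=
    disjoint_stripOver fun _ _ t h h' => h.not_gt h'.1
  have d₂ : Disjoint (stripOver (fun _ => Iio 0) ∪ stripOver fun _ => Ioo 0 1)
      (stripOver fun x => Ioo 1 x⁻¹) :=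
    .union_left (disjoint_stripOver fun _ _ t h h' => (one_pos.trans h'.1).not_gt h)
      (disjoint_stripOver fun _ _ t h h' => h.2.not_gt h'.1)
  have d₃ : Disjoint (stripOver (fun _ => Iio 0) ∪ stripOver (fun _ => Ioo 0 1) ∪
      stripOver fun x => Ioo 1 x⁻¹) (stripOver fun x => Ioi x⁻¹) :=
    .union_left
      (.union_left (disjoint_stripOver fun _ hx t h h' => (h.trans (inv_pos.mpr hx.1)).not_gt h')
        (disjoint_stripOver fun _ hx t h h' => (h.2.trans (hinv hx)).not_gt h'))
      (disjoint_stripOver fun _ _ t h h' => h.2.not_gt h')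
  have hint := ((h₀.union h₁).union h₂).union h₃
  have hdiff : ∀ z ∈ Ioo 0 1 ×ˢ univ \ (stripOver (fun _ => Iio 0) ∪ stripOver (fun _ => Ioo 0 1) ∪
      stripOver (fun x => Ioo 1 x⁻¹) ∪ stripOver fun x => Ioi x⁻¹), f z = 0 := by
    rintro ⟨x, t⟩ ⟨⟨hx, -⟩, hz⟩
    refine hf x t ?_
    simp only [mem_union, mem_stripOver, mem_Iio, mem_Ioi, mem_Ioo] at hz hx
    grind
  have hS : MeasurableSet (Ioo (0 : ℝ) 1 ×ˢ (univ : Set ℝ)) := measurableSet_Ioo.prod .univ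
  refine ⟨hint.of_forall_sdiff_eq_zero hS hdiff, ?_⟩
  rw [setIntegral_eq_of_subset_of_forall_sdiff_eq_zero hS _ hdiff,
    setIntegral_union d₃ measurableSet_stripOver_Ioi_inv ((h₀.union h₁).union h₂) h₃,
    setIntegral_union d₂ measurableSet_stripOver_Ioo_inv (h₀.union h₁) h₂,
    setIntegral_union d₁ measurableSet_stripOver_Ioo h₀ h₁]
  rintro ⟨x, t⟩ (((⟨hx, -⟩ | ⟨hx, -⟩) | ⟨hx, -⟩) | ⟨hx, -⟩) <;> exact ⟨hx, trivial⟩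

lemma integrableOn_and_setIntegral_eq_of_lintegral {p q c : ℝ} {M : ℝ≥0∞} {S : Set (ℝ × ℝ)}
    {g : ℝ × ℝ → ℝ} (hS : MeasurableSet S) (hM : M ≠ ∞)
    (hlint : ∫⁻ z in S, ENNReal.ofReal (doubleEulerKernel p q z) = M) (hg : ∀ z ∈ S, g z = c) :
    IntegrableOn (fun z => doubleEulerKernel p q z * g z) S ∧
      ∫ z in S, doubleEulerKernel p q z * g z = M.toReal * c := by
  have hnonneg := doubleEulerKernel_nonneg p q
  have hmeas := (measurable_doubleEulerKernel p q).aestronglyMeasurable (μ := volume.restrict S)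
  have hint : IntegrableOn (doubleEulerKernel p q) S := by
    refine ⟨hmeas, ?_⟩
    rw [hasFiniteIntegral_iff_ofReal (.of_forall hnonneg), hlint]
    exact hM.lt_top
  have hcongr : EqOn (fun z => doubleEulerKernel p q z * g z)
      (fun z => doubleEulerKernel p q z * c) S := fun z hz => by simp only [hg z hz]
  refine ⟨IntegrableOn.congr_fun (hint.mul_const c) hcongr.symm hS, ?_⟩
  rw [setIntegral_congr_fun hS hcongr, integral_mul_const,
    integral_eq_lintegral_of_nonneg_ae (.of_forall hnonneg) hmeas, hlint]

lemma doubleEulerKernel_eq_zero {p q x t : ℝ} (hp : p ≠ 1) (hq : q ≠ 1)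
    (ht : t = 0 ∨ t = 1 ∨ t = x⁻¹) : doubleEulerKernel p q (x, t) = 0 := by
  have hp' := Real.zero_rpow (sub_ne_zero.mpr hp)
  have hq' := Real.zero_rpow (sub_ne_zero.mpr hq)
  have h : (0 : ℝ) ^ (-1 / 2 : ℝ) = 0 := Real.zero_rpow (by norm_num)
  rcases eq_or_ne x 0 with rfl | hx
  · simp [doubleEulerKernel, h]
  · rcases ht with rfl | rfl | rfl <;> simp [doubleEulerKernel, eulerKernel, *]

lemma setIntegral_strip_doubleEulerKernel_mul {p q r c₀ c₁ c₂ c₃ : ℝ} {g : ℝ × ℝ → ℝ}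
    (hp : p ∈ Ioo (0 : ℝ) 1) (hq : q ∈ Ioo (0 : ℝ) 1) (hr : 0 < r) (hpqr : p + q + r = 3 / 2)
    (hg₀ : ∀ z ∈ stripOver (fun _ => Iio 0), g z = c₀)
    (hg₁ : ∀ z ∈ stripOver (fun _ => Ioo 0 1), g z = c₁)
    (hg₂ : ∀ z ∈ stripOver (fun x => Ioo 1 x⁻¹), g z = c₂)
    (hg₃ : ∀ z ∈ stripOver (fun x => Ioi x⁻¹), g z = c₃) :
    IntegrableOn (fun z => doubleEulerKernel p q z * g z) (Ioo 0 1 ×ˢ univ) ∧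
      ∫ z in Ioo 0 1 ×ˢ univ, doubleEulerKernel p q z * g z =
        (ellMoment p r).toReal * c₀ + (ellMoment p q).toReal * c₁ +
        (ellMoment r q).toReal * c₂ + (ellMoment q r).toReal * c₃ := by
  obtain ⟨hi₀, he₀⟩ := integrableOn_and_setIntegral_eq_of_lintegral measurableSet_stripOver_Iio
    (ellMoment_ne_top hp.1 hr) (lintegral_doubleEulerKernel_stripOver_Iio hpqr) hg₀
  obtain ⟨hi₁, he₁⟩ := integrableOn_and_setIntegral_eq_of_lintegral measurableSet_stripOver_Ioo
    (ellMoment_ne_top hp.1 hq.1) (lintegral_doubleEulerKernel_stripOver_Ioo p q) hg₁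
  obtain ⟨hi₂, he₂⟩ := integrableOn_and_setIntegral_eq_of_lintegral measurableSet_stripOver_Ioo_inv
    (ellMoment_ne_top hr hq.1) (lintegral_doubleEulerKernel_stripOver_Ioo_inv hpqr) hg₂
  obtain ⟨hi₃, he₃⟩ := integrableOn_and_setIntegral_eq_of_lintegral measurableSet_stripOver_Ioi_inv
    (ellMoment_ne_top hq.1 hr) (lintegral_doubleEulerKernel_stripOver_Ioi_inv hpqr) hg₃
  rw [← he₀, ← he₁, ← he₂, ← he₃]
  refine setIntegral_strip_eq_add (fun x t ht => ?_) hi₀ hi₁ hi₂ hi₃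
  rw [doubleEulerKernel_eq_zero hp.2.ne hq.2.ne ht, zero_mul]

lemma setIntegral_strip_mul_sin_eulerPhase_eq_zero {p q r : ℝ} (hp : p < 1) (hq : q < 1)
    (hF : IntegrableOn (doubleEulerKernel p q) (Ioo 0 1 ×ˢ univ))
    (hint : IntegrableOn
      (fun z => doubleEulerKernel p q z * Real.sin (eulerPhase p q r z.1 z.2)) (Ioo 0 1 ×ˢ univ)) :
    ∫ z in Ioo 0 1 ×ˢ univ, doubleEulerKernel p q z * Real.sin (eulerPhase p q r z.1 z.2) = 0 := by
  rw [Measure.volume_eq_prod] at hF hint ⊢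
  rw [setIntegral_prod _ hint]
  rw [IntegrableOn, ← Measure.prod_restrict] at hF
  refine integral_eq_zero_of_ae ?_
  filter_upwards [hF.prod_right_ae, ae_restrict_mem measurableSet_Ioo] with x hFx hx
  have hx1 : 0 < |1 - x| := abs_pos.mpr (sub_pos.mpr hx.2).ne'
  have hx0 : 0 < |x| := abs_pos.mpr hx.1.ne'
  have hweight : |x| ^ (-1 / 2 : ℝ) * |1 - x| ^ (-1 / 2 : ℝ) ≠ 0 := by positivity
  simp only [doubleEulerKernel, Measure.restrict_univ,
    integrable_const_mul_iff hweight.isUnit] at hFx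
  simp only [doubleEulerKernel, mul_assoc, Measure.restrict_univ, integral_const_mul,
    integral_eulerKernel_mul_sin_eulerPhase hp hq hx.1 hFx, mul_zero, Pi.zero_apply]

/-- Integrating the imaginary part of the Euler integrand over the strip gives `0` fibrewise, and
one Beta moment for each of the three regions on which its argument is not a multiple of `π`. -/
lemma ellMoment_relation {p q r : ℝ} (hp : p ∈ Ioo (0 : ℝ) 1) (hq : q ∈ Ioo (0 : ℝ) 1)
    (hr : 0 < r) (hpqr : p + q + r = 3 / 2) :
    Real.sin (Real.pi * p) * (ellMoment p q).toReal +
      Real.cos (Real.pi * r) * (ellMoment r q).toReal =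
      Real.sin (Real.pi * r) * (ellMoment q r).toReal := by
  obtain ⟨hF, -⟩ := setIntegral_strip_doubleEulerKernel_mul (g := fun _ => 1) hp hq hr hpqr
    (fun _ _ => rfl) (fun _ _ => rfl) (fun _ _ => rfl) (fun _ _ => rfl)
  simp only [mul_one] at hF
  obtain ⟨hint, hsum⟩ := setIntegral_strip_doubleEulerKernel_mul
    (g := fun z => Real.sin (eulerPhase p q r z.1 z.2)) hp hq hr hpqr
    (fun z hz => sin_eulerPhase_of_lt_zero hpqr hz.1.1 hz.2)
    (fun z hz => sin_eulerPhase_of_mem_Ioo_zero_one hpqr hz.1.2 hz.2)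
    (fun z hz => sin_eulerPhase_of_mem_Ioo_one_inv hpqr hz.1.1 hz.2)
    (fun z hz => sin_eulerPhase_of_inv_lt hpqr hz.1 hz.2)
  rw [setIntegral_strip_mul_sin_eulerPhase_eq_zero hp.2 hq.2 hF hint] at hsum
  linear_combination hsum

end DoubleEulerIntegral

section Rotation

open Complex

/-- Multiplied out, the real and imaginary parts of this identity are `ellMoment_relation` at
`((1 - a) / 2, a, 1 - a / 2)` and `(1 - a / 2, a, (1 - a) / 2)`, whose right-hand sides are
evaluated by Landen's transformation. -/
lemma ellMoment_rotation_half {a : ℝ} (ha : a ∈ Ioo (0 : ℝ) 1) :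
    exp (-(Real.pi * a / 2 : ℝ) * I) * ((ellMoment ((1 - a) / 2) a).toReal +
        (4 ^ a / 2 : ℝ) * I * (ellMoment ((a + 1) / 2) (1 - a)).toReal) =
      exp ((Real.pi * a / 2 : ℝ) * I) * ((ellMoment (1 - a / 2) a).toReal -
        (4 ^ a / 2 : ℝ) * I * (ellMoment (a / 2) (1 - a)).toReal) := by
  obtain ⟨ha0, ha1⟩ := ha
  have hB := ellMoment_ne_top (p := (a + 1) / 2) (q := 1 - a) (by linarith) (by linarith)
  have hC := ellMoment_ne_top (p := a / 2) (q := 1 - a) (by linarith) (by linarith)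
  have hE := ellMoment_ne_top (p := a) (q := 1 - a / 2) (by linarith) (by linarith)
  have hκ : (0 : ℝ) ≤ 4 ^ a / 2 := by positivity
  have hadd := congrArg ENNReal.toReal (ellMoment_landen_add a)
  have hsub := congrArg ENNReal.toReal (ellMoment_landen_sub a)
  rw [ENNReal.toReal_mul, ENNReal.toReal_add hC hB, ENNReal.toReal_ofReal hκ] at hadd
  rw [ENNReal.toReal_add hE (by finiteness), ENNReal.toReal_mul, ENNReal.toReal_mul,
    ENNReal.toReal_ofReal hκ] at hsub
  have hcos := ellMoment_relation (p := (1 - a) / 2) (q := a) (r := 1 - a / 2)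
    ⟨by linarith, by linarith⟩ ⟨ha0, ha1⟩ (by linarith) (by ring)
  have hsin := ellMoment_relation (p := 1 - a / 2) (q := a) (r := (1 - a) / 2)
    ⟨by linarith, by linarith⟩ ⟨ha0, ha1⟩ (by linarith) (by ring)
  rw [show Real.pi * (1 - a / 2) = Real.pi - Real.pi * a / 2 by ring,
    show Real.pi * ((1 - a) / 2) = Real.pi / 2 - Real.pi * a / 2 by ring,
    Real.sin_pi_sub, Real.sin_pi_div_two_sub] at hcos hsin
  rw [Real.cos_pi_sub] at hcos
  rw [Real.cos_pi_div_two_sub] at hsin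
  rw [← ofReal_neg, exp_mul_I, exp_mul_I, ← ofReal_cos, ← ofReal_sin, ← ofReal_cos, ← ofReal_sin,
    Real.cos_neg, Real.sin_neg]
  apply Complex.ext
  · simp only [add_re, sub_re, mul_re, add_im, sub_im, mul_im, ofReal_re, ofReal_im, I_re, I_im]
    linear_combination hcos + Real.sin (Real.pi * a / 2) * hsub
  · simp only [add_re, sub_re, mul_re, add_im, sub_im, mul_im, ofReal_re, ofReal_im, I_re, I_im]
    linear_combination -hsin - Real.cos (Real.pi * a / 2) * hadd

lemma ellMoment_rotation {a : ℝ} (ha : a ∈ Ioo (0 : ℝ) 1) :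
    (ellMoment ((1 - a) / 2) a).toReal +
        (4 ^ a / 2 : ℝ) * I * (ellMoment ((a + 1) / 2) (1 - a)).toReal =
      exp (Real.pi * a * I) * ((ellMoment (1 - a / 2) a).toReal -
        (4 ^ a / 2 : ℝ) * I * (ellMoment (a / 2) (1 - a)).toReal) := by
  refine mul_left_cancel₀ (exp_ne_zero (-(Real.pi * a / 2 : ℝ) * I)) ?_
  rw [ellMoment_rotation_half ha, ← mul_assoc, ← exp_add]
  push_cast
  ring_nf

lemma toReal_ellMoment_eq_Fval {r s : ℚ} {p q : ℝ} (hr : 0 < r) (hrs : r < s) (hp : p = r)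
    (hq : q = s - r) :
    (ellMoment p q).toReal = Real.pi * r.den * 4 ^ (2 * p) * Fval r s := by
  subst hp hq
  have hr' : (0 : ℝ) < r := mod_cast hr
  have hrs' : (0 : ℝ) < s - r := sub_pos.mpr (mod_cast hrs)
  have hpow : (4 : ℝ) ^ (2 * (r : ℝ)) * 2 ^ (1 - 4 * (r : ℝ)) = 2 := by
    rw [show (4 : ℝ) = 2 ^ (2 : ℝ) by norm_num, ← Real.rpow_mul two_pos.le,
      ← Real.rpow_add two_pos]
    norm_num [← mul_assoc]
  have hden : (r.den : ℝ) ≠ 0 := mod_cast r.den_ne_zero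
  rw [toReal_ellMoment hr' hrs', add_sub_cancel, Fval]
  generalize (4 : ℝ) ^ (2 * (r : ℝ)) = x, (2 : ℝ) ^ (1 - 4 * (r : ℝ)) = y at hpow ⊢
  field_simp
  linear_combination -(betaFn r (s - r) * threeF2 (1 / 2) (1 / 2) r 1 s) * hpow

lemma Fval_rotation {a : ℚ} (ha : a ∈ Ioo (0 : ℚ) 1) :
    ((1 - a) / 2).den * (Fval ((1 - a) / 2) ((1 + a) / 2) : ℂ) +
        ((4 : ℝ) ^ (3 * a : ℝ) / 2 : ℝ) * ((a + 1) / 2).den * I *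
          Fval ((a + 1) / 2) ((3 - a) / 2) =
      exp (Real.pi * a * I) *
        (4 * (1 - a / 2).den * Fval (1 - a / 2) (1 + a / 2) -
          ((4 : ℝ) ^ (3 * a : ℝ) / 8 : ℝ) * (a / 2).den * I * Fval (a / 2) (1 - a / 2)) := by
  obtain ⟨ha0, ha1⟩ := ha
  have h := ellMoment_rotation (a := a) ⟨mod_cast ha0, mod_cast ha1⟩
  rw [toReal_ellMoment_eq_Fval (r := (1 - a) / 2) (s := (1 + a) / 2) (by linarith) (by linarith)
      (by push_cast; ring) (by push_cast; ring),
    toReal_ellMoment_eq_Fval (r := (a + 1) / 2) (s := (3 - a) / 2) (by linarith) (by linarith)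
      (by push_cast; ring) (by push_cast; ring),
    toReal_ellMoment_eq_Fval (r := 1 - a / 2) (s := 1 + a / 2) (by linarith) (by linarith)
      (by push_cast; ring) (by push_cast; ring),
    toReal_ellMoment_eq_Fval (r := a / 2) (s := 1 - a / 2) (by linarith) (by linarith)
      (by push_cast; ring) (by push_cast; ring),
    show 2 * ((1 - (a : ℝ)) / 2) = 1 - a by ring, show 2 * (((a : ℝ) + 1) / 2) = 1 + a by ring,
    show 2 * (1 - (a : ℝ) / 2) = 1 + (1 - a) by ring, show 2 * ((a : ℝ) / 2) = a by ring,
    Real.rpow_add four_pos, Real.rpow_add four_pos, Real.rpow_one] at h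
  have hcube : (4 : ℝ) ^ (3 * a : ℝ) = (4 ^ (a : ℝ)) ^ 3 := by
    rw [mul_comm, Real.rpow_mul four_pos.le, Real.rpow_ofNat]
  have hpow : (4 : ℝ) ^ (1 - (a : ℝ)) * 4 ^ (a : ℝ) = 4 := by
    rw [← Real.rpow_add four_pos, sub_add_cancel, Real.rpow_one]
  have hpow0 : (4 : ℝ) ^ (1 - (a : ℝ)) ≠ 0 := by positivity
  have hpi : (Real.pi : ℂ) ≠ 0 := mod_cast Real.pi_ne_zero
  rw [hcube]
  generalize (4 : ℝ) ^ (a : ℝ) = u, (4 : ℝ) ^ (1 - (a : ℝ)) = v at h hpow hpow0 ⊢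
  replace hpow : (v * u : ℂ) = 4 := mod_cast hpow
  replace hpow0 : (v : ℂ) ≠ 0 := mod_cast hpow0
  push_cast at h ⊢
  refine mul_left_cancel₀ (mul_ne_zero hpi hpow0) ?_
  linear_combination h + (Real.pi * u ^ 2 / 2 * I * (((a + 1) / 2).den *
    Fval ((a + 1) / 2) ((3 - a) / 2) + exp (Real.pi * a * I) *
    (a / 2).den * Fval (a / 2) (1 - a / 2) / 4)) * hpow

end Rotation

end

open Complex in
theorem three_term_class8_general :
    (Fval (1/12) (11/12) : ℂ) + 16 * I * (Fval (11/12) (13/12) : ℂ) =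
      Complex.exp (2 * (Real.pi : ℂ) * I / 3) ^ 2 *
        (-4 * (Fval (5/12) (7/12) : ℂ) - 4 * I * (Fval (7/12) (17/12) : ℂ)) := by
  have hrot := Fval_rotation (a := 5 / 6) (by norm_num)
  have hpow : (4 : ℝ) ^ (3 * (5 / 6 : ℚ) : ℝ) = 32 := by
    rw [show (4 : ℝ) = 2 ^ (2 : ℝ) by norm_num, ← Real.rpow_mul two_pos.le]
    norm_num
  have hexp : exp (Real.pi * (5 / 6 : ℚ) * I) = -I * exp (2 * Real.pi * I / 3) ^ 2 := by
    rw [← exp_neg_pi_div_two_mul_I, ← exp_nat_mul, ← exp_add]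
    push_cast
    ring_nf
  have hden : (1 / 12 : ℚ).den = 12 ∧ (11 / 12 : ℚ).den = 12 ∧ (7 / 12 : ℚ).den = 12 ∧
      (5 / 12 : ℚ).den = 12 := by norm_num
  rw [hpow, hexp] at hrot
  norm_num [hden] at hrot
  linear_combination hrot / 12 + 4 * exp (2 * Real.pi * I / 3) ^ 2 * Fval (5 / 12) (7 / 12) * I_sq

open Complex in
/-- Assuming F(5/12,7/12)/F(7/12,17/12) ∉ ℚ(√3):
F(1/12,11/12) + 16i·F(11/12,13/12) = ζ₃²·(−4·F(5/12,7/12) − 4i·F(7/12,17/12)),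
where ζ₃ = e^{2πi/3}. -/
theorem three_term_class8
    (hirr : ¬ ∃ a b : ℚ, Fval (5/12) (7/12) / Fval (7/12) (17/12) =
      (a : ℝ) + (b : ℝ) * Real.sqrt 3) :
    (Fval (1/12) (11/12) : ℂ) + 16 * I * (Fval (11/12) (13/12) : ℂ) =
      Complex.exp (2 * (Real.pi : ℂ) * I / 3) ^ 2 *
        (-4 * (Fval (5/12) (7/12) : ℂ) - 4 * I * (Fval (7/12) (17/12) : ℂ)) :=
  three_term_class8_general
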